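/- arXiv:1506.02407 — 2 statements merged into one kernel-verified Lean document; each statement's English description precedes it below -/
import Mathlib

section
/- Let P be a finite poset. The order polytope O(P), i.e., the convex hull in ℝ^P of the characteristic vectors of the order filters of P, equals the set of order-preserving functions from P to [0,1]: O(P) = {f ∈ ℝ^P : 0 ≤ f(p) ≤ 1 for all p ∈ P, and f(p) ≤ f(q) whenever p ≤ q in P}. -/
theorem stmt13_aux (P : Type*) [PartialOrder P] [Fintype P] (n : ℕ) :
    ∀ f : P → ℝ, (∀ p : P, 0 ≤ f p ∧ f p ≤ 1) → (∀ p q : P, p ≤ q → f p ≤ f q) →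
    {p | 0 < f p ∧ f p < 1}.ncard = n →
    f ∈ convexHull ℝ {x : P → ℝ | ∃ J : Set P, IsUpperSet J ∧ x = Set.indicator J 1} := by
  classical
  induction n using Nat.strong_induction_on with
  | _ n ih =>
  intro f h01 hm hn
  by_cases hS : ({p | 0 < f p ∧ f p < 1} : Set P).Nonempty
  · obtain ⟨m, ⟨hm0, hm1⟩, hmin⟩ := Set.exists_min_image _ f (Set.toFinite _) hS
    have hmin' : ∀ p, 0 < f p → f m ≤ f p := by
      intro p hp
      by_cases h : f p < 1
      · exact hmin p ⟨hp, h⟩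
      · linarith
    have hpos : 0 < 1 - f m := by linarith
    let g : P → ℝ := fun p => if 0 < f p then (f p - f m) / (1 - f m) else 0
    have hg : g ∈ convexHull ℝ
        {x : P → ℝ | ∃ J : Set P, IsUpperSet J ∧ x = Set.indicator J 1} := by
      refine ih _ ?_ g ?_ ?_ rfl
      · rw [← hn]
        apply Set.ncard_lt_ncard _ (Set.toFinite _)
        refine (Set.ssubset_iff_of_subset ?_).2 ⟨m, ⟨hm0, hm1⟩, ?_⟩
        · rintro p ⟨h1, h2⟩
          by_cases h : 0 < f p
          · simp only [g, if_pos h] at h2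
            rw [div_lt_one hpos] at h2
            exact ⟨h, by linarith⟩
          · simp [g, h] at h1
        · simp [g]
      · intro p
        by_cases h : 0 < f p
        · simp only [g, if_pos h]
          exact ⟨div_nonneg (by linarith [hmin' p h]) hpos.le,
            (div_le_one hpos).2 (by linarith [(h01 p).2])⟩
        · simp [g, h]
      · intro p q hpq
        have hle := hm p q hpq
        by_cases h : 0 < f p
        · have h' : 0 < f q := by linarith
          simp only [g, if_pos h, if_pos h']
          gcongr
        · by_cases h' : 0 < f q
          · simp only [g, if_neg h, if_pos h']
            exact div_nonneg (by linarith [hmin' q h']) hpos.le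
          · simp [g, h, h']
    have hJ : Set.indicator {p | 0 < f p} (1 : P → ℝ) ∈ convexHull ℝ
        {x : P → ℝ | ∃ J : Set P, IsUpperSet J ∧ x = Set.indicator J 1} := by
      refine subset_convexHull ℝ _ ⟨_, ?_, rfl⟩
      intro p q hpq (hp : 0 < f p)
      exact lt_of_lt_of_le hp (hm p q hpq)
    have := (convex_convexHull ℝ _) hJ hg hm0.le hpos.le (by ring)
    convert this using 1
    funext p
    by_cases h : 0 < f p
    · simp [g, h, Set.indicator]
      field_simp
      ring
    · have : f p = 0 := le_antisymm (not_lt.1 h) (h01 p).1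
      simp [g, Set.indicator, this]
  · refine subset_convexHull ℝ _ ⟨{p | 0 < f p}, ?_, ?_⟩
    · intro p q hpq (hp : 0 < f p)
      exact lt_of_lt_of_le hp (hm p q hpq)
    · funext p
      by_cases h : 0 < f p
      · have : ¬ f p < 1 := fun h' => hS ⟨p, h, h'⟩
        simp [Set.indicator, h]
        linarith [(h01 p).2]
      · have : f p = 0 := le_antisymm (not_lt.1 h) (h01 p).1
        simp [Set.indicator, this]

/-- The order polytope `O(P)`, i.e. the convex hull in `ℝ^P` of the
characteristic vectors of the order filters of `P`, equals the set of order-preserving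
functions `P → [0,1]`. -/
theorem stmt13 (P : Type*) [PartialOrder P] [Fintype P] :
    convexHull ℝ {x : P → ℝ | ∃ J : Set P, IsUpperSet J ∧ x = Set.indicator J 1} =
    {f : P → ℝ | (∀ p : P, 0 ≤ f p ∧ f p ≤ 1) ∧ ∀ p q : P, p ≤ q → f p ≤ f q} := by
  classical
  apply Set.Subset.antisymm
  · apply convexHull_min
    · rintro _ ⟨J, hJ, rfl⟩
      refine ⟨fun p => ?_, fun p q hpq => ?_⟩
      · by_cases h : p ∈ J <;> simp [h]
      · by_cases h : p ∈ J
        · simp [h, hJ hpq h]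
        · by_cases h' : q ∈ J <;> simp [h, h']
    · rintro x ⟨hx, hx'⟩ y ⟨hy, hy'⟩ a b ha hb hab
      refine ⟨fun p => ?_, fun p q hpq => ?_⟩
      · simp only [Pi.add_apply, Pi.smul_apply, smul_eq_mul]
        have h1 := mul_nonneg ha (hx p).1
        have h2 := mul_nonneg hb (hy p).1
        have h3 := mul_le_mul_of_nonneg_left (hx p).2 ha
        have h4 := mul_le_mul_of_nonneg_left (hy p).2 hb
        constructor <;> linarith
      · simp only [Pi.add_apply, Pi.smul_apply, smul_eq_mul]
        have h3 := mul_le_mul_of_nonneg_left (hx' p q hpq) ha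
        have h4 := mul_le_mul_of_nonneg_left (hy' p q hpq) hb
        linarith
  · rintro f ⟨h1, h2⟩
    exact stmt13_aux P _ f h1 h2 rfl
end

section
/- Let P = {p_1, …, p_n} be a finite poset. The Hibi ring ℂ[P] is a normal domain: it is an integral domain that is integrally closed in its field of fractions. (This underlies the corollary that the projective Hibi variety X_P is projectively normal.) -/
open MvPolynomial

/-- The Hibi ring `ℂ[P]` of a finite poset `P`: the `ℂ`-subalgebra of the polynomial ring
`ℂ[x_p (p ∈ P), t]` (variables indexed by `Option P`, with `t` the variable `X none`)
generated by the monomials `t · ∏_{p ∈ I} x_p` for `I` an order ideal of `P`. -/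
noncomputable def hibiRing (P : Type*) [PartialOrder P] [Fintype P] :
    Subalgebra ℂ (MvPolynomial (Option P) ℂ) :=
  Algebra.adjoin ℂ
    {m : MvPolynomial (Option P) ℂ | ∃ I : Finset P, IsLowerSet (↑I : Set P) ∧
      m = X none * ∏ p ∈ I, X (some p)}

/-- The substitution `x_k ↦ x_k T^{w_k}` into Laurent polynomials. -/
noncomputable def hibiTwist {σ : Type*} (w : σ → ℤ) :
    MvPolynomial σ ℂ →ₐ[ℂ] LaurentPolynomial (MvPolynomial σ ℂ) :=
  MvPolynomial.aeval (fun k => LaurentPolynomial.C (X k) * LaurentPolynomial.T (w k))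

/-- The weight of an exponent vector. -/
noncomputable def hibiWeight {σ : Type*} (w : σ → ℤ) (e : σ →₀ ℕ) : ℤ := e.sum fun k n => n * w k

theorem hibiTwist_monomial {σ : Type*} (w : σ → ℤ) (e : σ →₀ ℕ) (c : ℂ) :
    hibiTwist w (monomial e c) =
      LaurentPolynomial.C (monomial e c) * LaurentPolynomial.T (hibiWeight w e) := by
  classical
  induction e using Finsupp.induction_linear generalizing c with
  | zero =>
    simp only [hibiTwist, hibiWeight, Finsupp.sum_zero_index, LaurentPolynomial.T_zero, mul_one]
    rw [aeval_monomial]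
    simp only [Finsupp.prod_zero_index, mul_one]
    rfl
  | add f g hf hg =>
    have h1 : (monomial (f + g) c : MvPolynomial σ ℂ) = monomial f c * monomial g 1 := by
      simp [monomial_mul]
    have h2 : hibiWeight w (f + g) = hibiWeight w f + hibiWeight w g := by
      unfold hibiWeight
      rw [Finsupp.sum_add_index']
      · simp
      · intros; push_cast; ring
    rw [h1, map_mul, hf, hg, h2, LaurentPolynomial.T_add, map_mul]
    ring
  | single k n =>
    have h2 : hibiWeight w (Finsupp.single k n) = n * w k := by
      unfold hibiWeight
      rw [Finsupp.sum_single_index]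
      simp
    rw [h2, hibiTwist, aeval_monomial, Finsupp.prod_single_index (by simp), mul_pow,
      LaurentPolynomial.T_pow, ← mul_assoc, ← map_pow]
    congr 1
    have h3 : (monomial (Finsupp.single k n) c : MvPolynomial σ ℂ) = C c * X k ^ n := by
      rw [C_mul_X_pow_eq_monomial]
    rw [h3, map_mul]
    rfl

theorem hibiTwist_coeff {σ : Type*} (w : σ → ℤ) (f : MvPolynomial σ ℂ) (e : σ →₀ ℕ) :
    coeff e ((hibiTwist w f).coeff (hibiWeight w e)) = coeff e f := by
  classical
  induction f using MvPolynomial.induction_on' with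
  | monomial u a =>
    rw [hibiTwist_monomial, ← LaurentPolynomial.single_eq_C_mul_T, AddMonoidAlgebra.coeff_single,
      Finsupp.single_apply]
    by_cases h : u = e
    · subst h; simp
    · split_ifs <;> simp [coeff_monomial, h]
  | add p q hp hq => simp [hp, hq]

/-- `S[T]` is integrally closed in `S[T,T⁻¹]` for a normal domain `S[T]`. -/
theorem laurent_integral {S : Type*} [CommRing S] [IsDomain S] [IsIntegrallyClosed (Polynomial S)]
    (x : LaurentPolynomial S) (hx : IsIntegral (Polynomial S) x) :
    ∃ y : Polynomial S, Polynomial.toLaurent y = x := by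
  let K := FractionRing (Polynomial S)
  have hM : Submonoid.powers (Polynomial.X : Polynomial S) ≤ nonZeroDivisors (Polynomial S) :=
    powers_le_nonZeroDivisors_of_noZeroDivisors Polynomial.X_ne_zero
  let g : LaurentPolynomial S →+* K :=
    IsLocalization.lift (M := Submonoid.powers (Polynomial.X : Polynomial S))
      (g := algebraMap (Polynomial S) K)
      (fun y => IsLocalization.map_units K ⟨y.1, hM y.2⟩)
  have hg : ∀ p : Polynomial S, g (Polynomial.toLaurent p) = algebraMap _ K p := by
    intro p
    exact IsLocalization.lift_eq _ p
  have hinj : Function.Injective g := by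
    rw [injective_iff_map_eq_zero]
    intro a ha
    obtain ⟨n, f, hf⟩ := LaurentPolynomial.exists_T_pow a
    have h1 : algebraMap _ K f = 0 := by rw [← hg, hf, map_mul, ha, zero_mul]
    have h2 : f = 0 := (IsFractionRing.injective (Polynomial S) K) (by rw [h1, map_zero])
    rw [h2, map_zero] at hf
    exact ((LaurentPolynomial.isUnit_T (n : ℤ)).mul_left_eq_zero).1 hf.symm
  have hi : IsIntegral (Polynomial S) (g x) :=
    hx.map_of_comp_eq (RingHom.id _) g (by
      refine RingHom.ext fun p => ?_
      simp [LaurentPolynomial.algebraMap_eq_toLaurent, hg])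
  obtain ⟨y, hy⟩ := IsIntegrallyClosed.algebraMap_eq_of_integral hi
  exact ⟨y, hinj (by rw [hg, hy])⟩

/-- Key normality step: elements of `S` integral over a subalgebra of elements of nonnegative
weight are of nonnegative weight. -/
theorem weight_nonneg_of_integral {σ : Type*} [Finite σ] (w : σ → ℤ)
    (R : Subalgebra ℂ (MvPolynomial σ ℂ))
    (hR : ∀ r ∈ R, ∃ y, Polynomial.toLaurent y = hibiTwist w r)
    (c : MvPolynomial σ ℂ) (hc : IsIntegral R c) (e : σ →₀ ℕ) (he : coeff e c ≠ 0) :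
    0 ≤ hibiWeight w e := by
  choose ψ hψ using fun r : R => hR r.1 r.2
  have hinj := Polynomial.toLaurent_injective (R := MvPolynomial σ ℂ)
  let Ψ : R →+* Polynomial (MvPolynomial σ ℂ) :=
    { toFun := ψ
      map_one' := hinj (by simp [hψ])
      map_zero' := hinj (by simp [hψ])
      map_mul' := fun a b => hinj (by simp [hψ])
      map_add' := fun a b => hinj (by simp [hψ]) }
  have hi : IsIntegral (Polynomial (MvPolynomial σ ℂ)) (hibiTwist w c) :=
    hc.map_of_comp_eq Ψ (hibiTwist w).toRingHom (by
      ext1 r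
      exact hψ r)
  obtain ⟨y, hy⟩ := laurent_integral _ hi
  by_contra hneg
  apply he
  rw [← hibiTwist_coeff w, ← hy, LaurentPolynomial.coeff_toLaurent]
  rw [Finsupp.mapDomain_notin_range]
  · simp
  · rintro ⟨n, hn⟩
    simp at hn
    omega

/-- The exponent vector of a generator. -/
noncomputable def hibiExp {P : Type*} (I : Finset P) : Option P →₀ ℕ :=
  Finsupp.single none 1 + ∑ p ∈ I, Finsupp.single (some p) 1

theorem hibiExp_none {P : Type*} (I : Finset P) : hibiExp I none = 1 := by
  simp [hibiExp, Finsupp.finsetSum_apply]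

open Classical in
theorem hibiExp_some {P : Type*} (I : Finset P) (p : P) :
    hibiExp I (some p) = if p ∈ I then 1 else 0 := by
  simp [hibiExp, Finsupp.finsetSum_apply, Finsupp.single_apply]

theorem hibiExp_monomial {P : Type*} (I : Finset P) :
    (X none * ∏ p ∈ I, X (some p) : MvPolynomial (Option P) ℂ) = monomial (hibiExp I) 1 := by
  classical
  unfold hibiExp
  have : (∏ p ∈ I, X (some p) : MvPolynomial (Option P) ℂ)
      = monomial (∑ p ∈ I, Finsupp.single (some p) 1) 1 := by
    induction I using Finset.induction_on with
    | empty => simp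
    | insert a s ha ih => rw [Finset.prod_insert ha, Finset.sum_insert ha, ih, X, monomial_mul, mul_one]
  rw [this, X, monomial_mul, mul_one]

theorem monomial_mem_hibi {P : Type*} [PartialOrder P] [Fintype P] (k : ℕ) (e : Option P →₀ ℕ)
    (hk : e none = k) (h1 : ∀ p, e (some p) ≤ e none)
    (h2 : ∀ p q, p ≤ q → e (some q) ≤ e (some p)) (c : ℂ) :
    monomial e c ∈ hibiRing P := by
  classical
  induction k generalizing e c with
  | zero =>
    have : e = 0 := by
      ext o
      cases o with
      | none => simpa using hk
      | some p => have := h1 p; simp; omega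
    subst this
    exact (hibiRing P).algebraMap_mem c
  | succ k ih =>
    let I : Finset P := Finset.univ.filter fun p => 1 ≤ e (some p)
    let e' : Option P →₀ ℕ := e.mapRange (fun n => n - 1) rfl
    have hsum : e = hibiExp I + e' := by
      ext o
      cases o with
      | none => simp [hibiExp_none, e', hk]; omega
      | some p =>
        simp only [Finsupp.add_apply, hibiExp_some, e', I, Finsupp.mapRange_apply,
          Finset.mem_filter, Finset.mem_univ, true_and]
        split_ifs <;> omega
    have hm : (monomial e c : MvPolynomial (Option P) ℂ)
        = monomial (hibiExp I) 1 * monomial e' c := by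
      rw [monomial_mul, ← hsum, one_mul]
    rw [hm]
    refine mul_mem (Algebra.subset_adjoin ⟨I, ?_, (hibiExp_monomial I).symm⟩) (ih e' ?_ ?_ ?_ c)
    · intro a b hba ha
      simp only [I, Finset.coe_filter, Finset.mem_univ, true_and, Set.mem_ofPred_eq] at ha ⊢
      exact ha.trans (h2 _ _ hba)
    · simp [e', hk]
    · intro p
      have := h1 p
      simp only [e', Finsupp.mapRange_apply]; omega
    · intro p q hpq
      have := h2 p q hpq
      simp only [e', Finsupp.mapRange_apply]; omega

/-- The weight measuring `e i - e j`. -/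
noncomputable def hibiPair {P : Type*} (i j : Option P) : Option P → ℤ :=
  fun k => open Classical in (if k = i then 1 else 0) - (if k = j then 1 else 0)

theorem hibiPair_weight {P : Type*} [Fintype P] (i j : Option P) (e : Option P →₀ ℕ) :
    hibiWeight (hibiPair i j) e = e i - e j := by
  classical
  unfold hibiWeight hibiPair
  rw [Finsupp.sum_fintype _ _ (by simp)]
  simp only [mul_sub, Finset.sum_sub_distrib, mul_ite, mul_one, mul_zero]
  rw [Finset.sum_ite_eq', Finset.sum_ite_eq']
  simp

theorem hibi_twist_mem {P : Type*} [PartialOrder P] [Fintype P] (i j : Option P)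
    (hij : ∀ I : Finset P, IsLowerSet (↑I : Set P) → hibiExp I j ≤ hibiExp I i) :
    ∀ r ∈ hibiRing P, ∃ y, Polynomial.toLaurent y = hibiTwist (hibiPair i j) r := by
  intro r hr
  unfold hibiRing at hr
  induction hr using Algebra.adjoin_induction with
  | mem x hx =>
    obtain ⟨I, hI, rfl⟩ := hx
    have h := hij I hI
    rw [hibiExp_monomial, hibiTwist_monomial, hibiPair_weight]
    refine ⟨Polynomial.C (monomial (hibiExp I) 1) * Polynomial.X ^ (hibiExp I i - hibiExp I j), ?_⟩
    rw [Polynomial.toLaurent_C_mul_X_pow]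
    congr 2
    omega
  | algebraMap c =>
    refine ⟨Polynomial.C (C c), ?_⟩
    rw [Polynomial.toLaurent_C, AlgHom.commutes]
    rfl
  | add a b _ _ ha hb =>
    obtain ⟨y, hy⟩ := ha
    obtain ⟨z, hz⟩ := hb
    exact ⟨y + z, by rw [map_add, map_add, hy, hz]⟩
  | mul a b _ _ ha hb =>
    obtain ⟨y, hy⟩ := ha
    obtain ⟨z, hz⟩ := hb
    exact ⟨y * z, by rw [map_mul, map_mul, hy, hz]⟩

theorem hibi_mem_of_integral {P : Type*} [PartialOrder P] [Fintype P]
    (c : MvPolynomial (Option P) ℂ) (hc : IsIntegral (hibiRing P) c) : c ∈ hibiRing P := by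
  classical
  rw [c.as_sum]
  refine sum_mem fun e he => ?_
  rw [mem_support_iff] at he
  have key : ∀ i j : Option P,
      (∀ I : Finset P, IsLowerSet (↑I : Set P) → hibiExp I j ≤ hibiExp I i) → e j ≤ e i := by
    intro i j hij
    have := weight_nonneg_of_integral (hibiPair i j) (hibiRing P) (hibi_twist_mem i j hij) c hc e he
    rw [hibiPair_weight] at this
    omega
  refine monomial_mem_hibi _ e rfl (fun p => key _ _ ?_) (fun p q hpq => key _ _ ?_) _
  · intro I _
    rw [hibiExp_none, hibiExp_some]
    split_ifs <;> omega
  · intro I hI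
    rw [hibiExp_some, hibiExp_some]
    by_cases hq : q ∈ I
    · have hp : p ∈ I := hI hpq hq
      simp [hp]
      split_ifs <;> omega
    · simp [hq]

/-- The Hibi ring `ℂ[P]` is a normal domain: an integral domain which is
integrally closed in its field of fractions. -/
theorem stmt16 (P : Type*) [PartialOrder P] [Fintype P] :
    IsDomain (hibiRing P) ∧ IsIntegrallyClosed (hibiRing P) := by
  refine ⟨inferInstance, ?_⟩
  haveI : IsIntegrallyClosedIn (hibiRing P) (MvPolynomial (Option P) ℂ) :=
    isIntegrallyClosedIn_iff.2 ⟨Subtype.val_injective,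
      fun {x} hx => ⟨⟨x, hibi_mem_of_integral x hx⟩, rfl⟩⟩
  exact IsIntegrallyClosed.of_isIntegrallyClosed_of_isIntegrallyClosedIn (hibiRing P)
    (MvPolynomial (Option P) ℂ)
end
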